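/- arXiv:2109.03342 — 2 statements merged into one kernel-verified Lean document; each statement's English description precedes it below -/
import Mathlib

section
/- (Simplified first permutation moment under centering.) Let N ≥ 2 and let a = (a_{ij})_{1≤i,j≤N}, b = (b_{ij})_{1≤i,j≤N} be real arrays with ∑_{i,j} a_{ij} = 0 and ∑_{i,j} b_{ij} = 0. Then, with Γ(π) = ∑_{i,j} a_{ij} b_{π(i)π(j)} and π uniformly distributed over the N! permutations of {1,…,N}, E[Γ] = (1/(N−1)) (∑_{i=1}^N a_{ii}) (∑_{i=1}^N b_{ii}). -/
open MeasureTheory ProbabilityTheory Filter Finset Topology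

/-- Generalized correlation coefficient `Γ(π) = ∑_{i,j} a_{ij} b_{π(i)π(j)}`. -/
noncomputable def gammaStat (N : ℕ) (a b : Fin N → Fin N → ℝ) (π : Equiv.Perm (Fin N)) : ℝ :=
  ∑ i, ∑ j, a i j * b (π i) (π j)

/-- Expectation of a statistic of a uniformly random permutation of `{1,…,N}`. -/
noncomputable def permE (N : ℕ) (f : Equiv.Perm (Fin N) → ℝ) : ℝ :=
  (∑ π : Equiv.Perm (Fin N), f π) / (N.factorial : ℝ)

/-- Law of a real statistic of a uniformly random permutation of `{1,…,N}`. -/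
noncomputable def permLaw (N : ℕ) (f : Equiv.Perm (Fin N) → ℝ) : ProbabilityMeasure ℝ :=
  ⟨((PMF.uniformOfFintype (Equiv.Perm (Fin N))).map f).toMeasure, inferInstance⟩

/-- The standard normal distribution `N(0,1)` as a probability measure on `ℝ`. -/
noncomputable def stdGaussian : ProbabilityMeasure ℝ := ⟨gaussianReal 0 1, inferInstance⟩

/-- `x_N ≍ y_N` : there are constants `0 < c ≤ C` with `c y_N ≤ x_N ≤ C y_N` for all large `N`. -/
def AsympEquiv (x y : ℕ → ℝ) : Prop :=
  ∃ c C : ℝ, 0 < c ∧ c ≤ C ∧ ∀ᶠ N in atTop, c * y N ≤ x N ∧ x N ≤ C * y N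

/-- `max_{i,j} |a_{ij}|`. -/
noncomputable def arrMax (N : ℕ) (a : Fin N → Fin N → ℝ) : ℝ := ⨆ i, ⨆ j, |a i j|

/-- **Simplified first permutation moment under centering.** -/
theorem permE_gammaStat_centered (N : ℕ) (hN : 2 ≤ N) (a b : Fin N → Fin N → ℝ)
    (ha : ∑ i, ∑ j, a i j = 0) (hb : ∑ i, ∑ j, b i j = 0) :
    permE N (gammaStat N a b) =
      (1 / ((N : ℝ) - 1)) * (∑ i, a i i) * (∑ i, b i i) := by
  obtain ⟨F, hF⟩ : ∃ F : Fin N → Fin N → ℝ,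
      F = fun i j => ∑ π : Equiv.Perm (Fin N), b (π i) (π j) := ⟨_, rfl⟩
  have hinv : ∀ (σ : Equiv.Perm (Fin N)) i j, F (σ i) (σ j) = F i j := by
    intro σ i j
    rw [hF]
    exact Fintype.sum_equiv (Equiv.mulRight σ) _ _ (fun π => rfl)
  have hdiag : ∑ i, F i i = (N.factorial : ℝ) * ∑ i, b i i := by
    rw [hF, Finset.sum_comm]
    have : ∀ π : Equiv.Perm (Fin N), ∑ i, b (π i) (π i) = ∑ i, b i i :=
      fun π => Equiv.sum_comp π (fun i => b i i)
    simp [this, Fintype.card_perm]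
  have hall : ∑ i, ∑ j, F i j = 0 := by
    have h1 : ∑ i, ∑ j, F i j = ∑ π : Equiv.Perm (Fin N), ∑ i, ∑ j, b (π i) (π j) := by
      rw [hF]
      symm
      rw [Finset.sum_comm]
      exact Finset.sum_congr rfl fun i _ => Finset.sum_comm
    rw [h1]
    refine Finset.sum_eq_zero fun π _ => ?_
    rw [← hb, ← Equiv.sum_comp π (fun i => ∑ j, b i j)]
    exact Finset.sum_congr rfl fun i _ => Equiv.sum_comp π (fun j => b (π i) j)
  have hsum : ∑ π, gammaStat N a b π = ∑ i, ∑ j, a i j * F i j := by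
    simp only [gammaStat, hF, Finset.mul_sum]
    rw [Finset.sum_comm]
    exact Finset.sum_congr rfl fun i _ => Finset.sum_comm
  obtain ⟨x, y, hxy⟩ : ∃ x y : Fin N, x ≠ y :=
    ⟨⟨0, by omega⟩, ⟨1, by omega⟩, by simp⟩
  have hD : ∀ i, F i i = F x x := by
    intro i
    have := hinv (Equiv.swap x i) x x
    rwa [Equiv.swap_apply_left] at this
  have hO : ∀ i j, i ≠ j → F i j = F x y := by
    intro i j hij
    have h := hinv (Equiv.swap (Equiv.swap x i y) j * Equiv.swap x i) x y
    have hne : i ≠ Equiv.swap x i y := by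
      intro h
      apply hxy
      apply (Equiv.swap x i).injective
      rw [Equiv.swap_apply_left]; exact h
    rw [Equiv.Perm.mul_apply, Equiv.Perm.mul_apply, Equiv.swap_apply_left, Equiv.swap_apply_left,
      Equiv.swap_apply_of_ne_of_ne hne hij] at h
    exact h
  have hFij : ∀ i j, F i j = F x y + if i = j then F x x - F x y else 0 := by
    intro i j
    split_ifs with h
    · subst h; rw [hD i]; ring
    · rw [hO i j h]; ring
  generalize F x x = D at *
  generalize F x y = O at *
  have e1 : (N : ℝ) * D = N.factorial * ∑ i, b i i := by
    rw [← hdiag]; simp [hD]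
  have e2 : (N : ℝ) * (N * O + (D - O)) = 0 := by
    rw [← hall]; simp [hFij, Finset.sum_add_distrib]; try ring
  have e3 : ∑ π, gammaStat N a b π = (D - O) * ∑ i, a i i := by
    rw [hsum]
    simp only [hFij, mul_add, Finset.sum_add_distrib, ← Finset.sum_mul, ha]
    simp [Finset.mul_sum, mul_comm]
  have hN' : (2 : ℝ) ≤ N := by exact_mod_cast hN
  have hN0 : (N : ℝ) ≠ 0 := by linarith
  have hN1 : (N : ℝ) - 1 ≠ 0 := by linarith
  have hf : (N.factorial : ℝ) ≠ 0 := by positivity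
  have e2' := (mul_eq_zero.mp e2).resolve_left hN0
  rw [permE, e3]
  field_simp
  linear_combination (∑ i, a i i) * e1 - (∑ i, a i i) * e2'
end

section
/- (Vanishing of odd scaled moments.) Let a^{(N)}, b^{(N)} be sequences of real N×N arrays with a_{ij} = a_{ji}, b_{ij} = b_{ji}, ∑_{i,j} a_{ij} = ∑_{i,j} b_{ij} = 0, and ∑_{i,j,k} a_{ij} a_{ik} ≍ N^3 (max_{i,j} |a_{ij}|)^2, ∑_{i,j,k} b_{ij} b_{ik} ≍ N^3 (max_{i,j} |b_{ij}|)^2 as N → ∞. Let Γ_N(π) = ∑_{i,j} a_{ij} b_{π(i)π(j)} with π uniform over permutations of {1,…,N}, and set σ_N = 2 √( (∑_{i,j,k} a_{ij} a_{ik})(∑_{i,j,k} b_{ij} b_{ik}) / N^3 ). Then for every fixed nonnegative integer m, E[(Γ_N/σ_N)^{2m+1}] → 0 as N → ∞. -/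
open MeasureTheory ProbabilityTheory Filter Finset Topology

lemma permE_add (N : ℕ) (f g : Equiv.Perm (Fin N) → ℝ) :
    permE N (fun π => f π + g π) = permE N f + permE N g := by
  simp only [permE, Finset.sum_add_distrib, add_div]

lemma permE_sub (N : ℕ) (f g : Equiv.Perm (Fin N) → ℝ) :
    permE N (fun π => f π - g π) = permE N f - permE N g := by
  simp only [permE, Finset.sum_sub_distrib, sub_div]

lemma permE_mul (N : ℕ) (c : ℝ) (f : Equiv.Perm (Fin N) → ℝ) :
    permE N (fun π => c * f π) = c * permE N f := by
  simp only [permE, ← Finset.mul_sum, mul_div_assoc]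

lemma permE_const (N : ℕ) (c : ℝ) : permE N (fun _ => c) = c := by
  have : (N.factorial : ℝ) ≠ 0 := by exact_mod_cast N.factorial_ne_zero
  simp [permE, Fintype.card_perm]
  field_simp

lemma permE_sum (N : ℕ) {ι : Type*} (s : Finset ι) (f : ι → Equiv.Perm (Fin N) → ℝ) :
    permE N (fun π => ∑ i ∈ s, f i π) = ∑ i ∈ s, permE N (f i) := by
  simp only [permE, ← Finset.sum_div]
  rw [Finset.sum_comm]

lemma permE_mono (N : ℕ) {f g : Equiv.Perm (Fin N) → ℝ} (h : ∀ π, f π ≤ g π) :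
    permE N f ≤ permE N g := by
  unfold permE
  gcongr
  exact h _

lemma permE_nonneg (N : ℕ) {f : Equiv.Perm (Fin N) → ℝ} (h : ∀ π, 0 ≤ f π) :
    0 ≤ permE N f := by
  have := permE_mono N h
  rwa [permE_const] at this

lemma permE_abs (N : ℕ) (f : Equiv.Perm (Fin N) → ℝ) :
    |permE N f| ≤ permE N (fun π => |f π|) := by
  rw [abs_le]
  constructor
  · have := permE_mono N (f := fun π => (-1) * |f π|) (g := f) (fun π => by
      have := neg_abs_le (f π); linarith)
    rw [permE_mul] at this
    linarith
  · exact permE_mono N (fun π => le_abs_self _)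

lemma permE_cs (N : ℕ) (f g : Equiv.Perm (Fin N) → ℝ) :
    (permE N (fun π => f π * g π)) ^ 2 ≤
      permE N (fun π => f π ^ 2) * permE N (fun π => g π ^ 2) := by
  unfold permE
  rw [div_pow, div_mul_div_comm, ← sq]
  gcongr
  exact Finset.sum_mul_sq_le_sq_mul_sq _ _ _

lemma permE_swap (N : ℕ) (f : Equiv.Perm (Fin N) → ℝ) (τ : Equiv.Perm (Fin N)) :
    permE N (fun π => f (π * τ)) = permE N f := by
  unfold permE
  congr 1
  exact Equiv.sum_comp (Equiv.mulRight τ) f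

/-- Symmetrisation over an exchangeable pair. -/
lemma permE_exch (N : ℕ) (f g : Equiv.Perm (Fin N) → ℝ) (i j : Fin N) :
    permE N (fun π => (f π - f (π * Equiv.swap i j)) * g π) =
      (1 / 2) * permE N (fun π => (f π - f (π * Equiv.swap i j)) *
        (g π - g (π * Equiv.swap i j))) := by
  have h := permE_swap N (fun π => (f π - f (π * Equiv.swap i j)) * g π) (Equiv.swap i j)
  simp only [mul_assoc, Equiv.swap_mul_self, mul_one] at h
  have h2 : permE N (fun π => (f π - f (π * Equiv.swap i j)) *
        (g π - g (π * Equiv.swap i j))) =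
      permE N (fun π => (f π - f (π * Equiv.swap i j)) * g π) +
      permE N (fun π => (f (π * Equiv.swap i j) - f π) * g (π * Equiv.swap i j)) := by
    rw [← permE_add]
    congr 1; ext π; ring
  rw [h2, h]; ring

lemma max_abs_pow_le (x y : ℝ) (k : ℕ) : (max |x| |y|) ^ (2 * k) ≤ x ^ (2 * k) + y ^ (2 * k) := by
  have hx : (0:ℝ) ≤ x ^ (2 * k) := (even_two_mul k).pow_nonneg x
  have hy : (0:ℝ) ≤ y ^ (2 * k) := (even_two_mul k).pow_nonneg y
  rcases max_choice |x| |y| with h | h <;> rw [h, (even_two_mul k).pow_abs] <;> linarith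

lemma diff_pow_bound (x y c : ℝ) (h : |x - y| ≤ c) (k : ℕ) :
    (x - y) * (x ^ (2 * k + 1) - y ^ (2 * k + 1)) ≤
      (2 * k + 1) * c ^ 2 * (x ^ (2 * k) + y ^ (2 * k)) := by
  have h1 := abs_pow_sub_pow_le x y (2 * k + 1)
  have h2 := max_abs_pow_le x y k
  simp only [Nat.add_sub_cancel] at h1
  push_cast at h1
  have h0 : (0:ℝ) ≤ x ^ (2 * k) + y ^ (2 * k) :=
    le_trans (by positivity) h2
  calc (x - y) * (x ^ (2 * k + 1) - y ^ (2 * k + 1))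
      ≤ |x - y| * |x ^ (2 * k + 1) - y ^ (2 * k + 1)| := by
        rw [← abs_mul]; exact le_abs_self _
    _ ≤ c * (c * (2 * k + 1) * (x ^ (2 * k) + y ^ (2 * k))) := by
        have hc : 0 ≤ c := (abs_nonneg _).trans h
        gcongr
        refine h1.trans ?_
        gcongr
    _ = _ := by ring

lemma second_order (x y : ℝ) (q : ℕ) :
    |x ^ (q + 2) - y ^ (q + 2) - (q + 2) * (x - y) * x ^ (q + 1)| ≤
      (q + 2) ^ 2 * (x - y) ^ 2 * (max |x| |y|) ^ q := by
  induction q with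
  | zero =>
    have : x ^ (0 + 2) - y ^ (0 + 2) - (((0:ℕ):ℝ) + 2) * (x - y) * x ^ (0 + 1) = -(x - y) ^ 2 := by
      push_cast; ring
    rw [this, abs_neg, abs_of_nonneg (sq_nonneg _)]
    norm_num
    nlinarith [sq_nonneg (x - y)]
  | succ q ih =>
    have e : x ^ (q + 1 + 2) - y ^ (q + 1 + 2) - (((q + 1 : ℕ) : ℝ) + 2) * (x - y) * x ^ (q + 1 + 1)
      = x * (x ^ (q + 2) - y ^ (q + 2) - (q + 2) * (x - y) * x ^ (q + 1)) -
        (x - y) * (x ^ (q + 2) - y ^ (q + 2)) := by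
      push_cast; ring
    rw [e]
    have h1 := abs_pow_sub_pow_le x y (q + 2)
    have e1 : q + 2 - 1 = q + 1 := by omega
    rw [e1] at h1
    push_cast at h1
    have hx : |x| ≤ max |x| |y| := le_max_left _ _
    set M := max |x| |y|
    have hM : 0 ≤ M := (abs_nonneg x).trans hx
    refine (abs_sub _ _).trans ?_
    rw [abs_mul, abs_mul]
    calc _ ≤ M * ((q + 2) ^ 2 * (x - y) ^ 2 * M ^ q) +
          |x - y| * (|x - y| * (q + 2) * M ^ (q + 1)) := by gcongr
      _ = ((q + 2) ^ 2 + (q + 2)) * (x - y) ^ 2 * M ^ (q + 1) := by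
          rw [← sq_abs (x - y)]; ring
      _ ≤ _ := by
          push_cast
          gcongr
          nlinarith

/-- Moment bound by exchangeable pairs, one step. -/
lemma gen_step (N : ℕ) (hN : 0 < N) (f : Equiv.Perm (Fin N) → ℝ) (lam c r : ℝ) (hl : 1 ≤ lam)
    (hr : 0 ≤ r)
    (hc : ∀ π i j, |f π - f (π * Equiv.swap i j)| ≤ c)
    (hR : ∀ π, |lam * N * f π - ∑ i, ∑ j, (f π - f (π * Equiv.swap i j))| ≤ (N : ℝ) ^ 2 * r)
    (k : ℕ) :
    permE N (fun π => f π ^ (2 * (k + 1))) ≤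
      (2 * (2 * k + 1)) * (N * c ^ 2 + N ^ 2 * r ^ 2) * permE N (fun π => f π ^ (2 * k)) := by
  have hN' : (0:ℝ) < N := by exact_mod_cast hN
  set A := permE N (fun π => f π ^ (2 * (k + 1))) with hA
  set B := permE N (fun π => f π ^ (2 * k)) with hB
  have hA0 : 0 ≤ A := permE_nonneg N fun π => (even_two_mul _).pow_nonneg _
  have hB0 : 0 ≤ B := permE_nonneg N fun π => (even_two_mul _).pow_nonneg _
  have key : ∀ i j, permE N (fun π => (f π - f (π * Equiv.swap i j)) * f π ^ (2 * k + 1)) ≤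
      (2 * k + 1) * c ^ 2 * B := by
    intro i j
    rw [permE_exch N f (fun π => f π ^ (2 * k + 1)) i j]
    have h1 := permE_mono N (fun π => diff_pow_bound (f π) (f (π * Equiv.swap i j)) c (hc π i j) k)
    rw [permE_mul, permE_add, permE_swap N (fun π => f π ^ (2 * k))] at h1
    linarith
  have pw : ∀ π, lam * N * f π ^ (2 * (k + 1)) ≤
      (∑ i, ∑ j, (f π - f (π * Equiv.swap i j)) * f π ^ (2 * k + 1)) +
      (N / 2 * f π ^ (2 * (k + 1)) + N ^ 3 * r ^ 2 / 2 * f π ^ (2 * k)) := by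
    intro π
    have e : (∑ i, ∑ j, (f π - f (π * Equiv.swap i j)) * f π ^ (2 * k + 1)) =
      (∑ i, ∑ j, (f π - f (π * Equiv.swap i j))) * f π ^ (2 * k + 1) := by
      simp only [Finset.sum_mul]
    rw [e]
    set S := ∑ i, ∑ j, (f π - f (π * Equiv.swap i j))
    have h2 : (lam * N * f π - S) * f π ^ (2 * k + 1) ≤ N ^ 2 * r * |f π| ^ (2 * k + 1) := by
      calc _ ≤ |(lam * N * f π - S) * f π ^ (2 * k + 1)| := le_abs_self _
        _ = |lam * N * f π - S| * |f π| ^ (2 * k + 1) := by rw [abs_mul, abs_pow]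
        _ ≤ _ := by gcongr; exact hR π
    have h3 : N ^ 2 * r * |f π| ^ (2 * k + 1) ≤
        N / 2 * f π ^ (2 * (k + 1)) + N ^ 3 * r ^ 2 / 2 * f π ^ (2 * k) := by
      rw [← (even_two_mul k).pow_abs (f π), ← (even_two_mul (k+1)).pow_abs (f π)]
      have : 0 ≤ N / 2 * |f π| ^ (2 * k) * (|f π| - N * r) ^ 2 := by positivity
      have e2 : N / 2 * |f π| ^ (2 * k) * (|f π| - N * r) ^ 2 =
        N / 2 * |f π| ^ (2 * (k + 1)) + N ^ 3 * r ^ 2 / 2 * |f π| ^ (2 * k)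
          - N ^ 2 * r * |f π| ^ (2 * k + 1) := by ring
      linarith
    have e3 : (lam * N * f π - S) * f π ^ (2 * k + 1) =
      lam * N * f π ^ (2 * (k + 1)) - S * f π ^ (2 * k + 1) := by ring
    linarith
  have h4 := permE_mono N pw
  rw [permE_mul, permE_add, permE_add, permE_mul, permE_mul, permE_sum] at h4
  have h5 : ∑ i, permE N (fun π => ∑ j, (f π - f (π * Equiv.swap i j)) * f π ^ (2 * k + 1)) ≤
      N * (N * ((2 * k + 1) * c ^ 2 * B)) := by
    calc _ ≤ ∑ i : Fin N, (N : ℝ) * ((2 * k + 1) * c ^ 2 * B) := by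
          refine Finset.sum_le_sum fun i _ => ?_
          rw [permE_sum]
          refine (Finset.sum_le_sum fun j _ => key i j).trans ?_
          simp
      _ = _ := by simp
  rw [← hA, ← hB] at h4
  have h6 : N / 2 * A ≤ N / 2 * ((2 * (2 * k + 1)) * (N * c ^ 2) + N ^ 2 * r ^ 2) * B := by
    have : N * A ≤ lam * N * A := by
      have : 1 * (N * A) ≤ lam * (N * A) := by gcongr
      linarith
    linarith
  have h7 : A ≤ ((2 * (2 * k + 1)) * (N * c ^ 2) + N ^ 2 * r ^ 2) * B := by
    rw [mul_assoc] at h6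
    exact le_of_mul_le_mul_left h6 (by positivity)
  refine h7.trans ?_
  gcongr
  have : (0:ℝ) ≤ N ^ 2 * r ^ 2 := by positivity
  have hk : (0:ℝ) ≤ k := by positivity
  nlinarith [mul_nonneg hk this]

lemma gen_moment (k : ℕ) : ∃ C : ℝ, 0 ≤ C ∧ ∀ (N : ℕ) (_ : 0 < N)
    (f : Equiv.Perm (Fin N) → ℝ) (lam c r : ℝ) (_ : 1 ≤ lam) (_ : 0 ≤ r)
    (_ : ∀ π i j, |f π - f (π * Equiv.swap i j)| ≤ c)
    (_ : ∀ π, |lam * N * f π - ∑ i, ∑ j, (f π - f (π * Equiv.swap i j))| ≤ (N : ℝ) ^ 2 * r),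
    permE N (fun π => f π ^ (2 * k)) ≤ C * (N * c ^ 2 + N ^ 2 * r ^ 2) ^ k := by
  induction k with
  | zero =>
    refine ⟨1, by norm_num, ?_⟩
    intro N hN f lam c r hl hr hc hR
    simp [permE_const]
  | succ k ih =>
    obtain ⟨C, hC, h⟩ := ih
    refine ⟨2 * (2 * k + 1) * C, by positivity, ?_⟩
    intro N hN f lam c r hl hr hc hR
    refine (gen_step N hN f lam c r hl hr hc hR k).trans ?_
    have := h N hN f lam c r hl hr hc hR
    calc _ ≤ (2 * (2 * k + 1)) * (N * c ^ 2 + N ^ 2 * r ^ 2) *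
        (C * (N * c ^ 2 + N ^ 2 * r ^ 2) ^ k) := by gcongr
      _ = _ := by ring

lemma swap_sum {N : ℕ} (i j : Fin N) (g h : Fin N → ℝ) :
    ∑ k, (g k - g (Equiv.swap i j k)) * h k = (g i - g j) * (h i - h j) := by
  by_cases hij : i = j
  · subst hij; simp
  · have : ∀ k, (g k - g (Equiv.swap i j k)) * h k =
        (if k = i then (g i - g j) * h i else 0) + (if k = j then (g j - g i) * h j else 0) := by
      intro k
      by_cases h1 : k = i
      · subst h1; simp [hij]
      · by_cases h2 : k = j
        · subst h2; simp [h1]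
        · simp [h1, h2, Equiv.swap_apply_of_ne_of_ne h1 h2]
    simp only [this, Finset.sum_add_distrib, Finset.sum_ite_eq', Finset.mem_univ, if_true]
    ring

/-- Linear permutation statistic. -/
noncomputable def linStat {N : ℕ} (α β : Fin N → ℝ) (π : Equiv.Perm (Fin N)) : ℝ :=
  ∑ i, α i * β (π i)

lemma linStat_diff {N : ℕ} (α β : Fin N → ℝ) (π : Equiv.Perm (Fin N)) (i j : Fin N) :
    linStat α β π - linStat α β (π * Equiv.swap i j) = (α i - α j) * (β (π i) - β (π j)) := by
  have := swap_sum i j (fun k => β (π k)) α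
  rw [mul_comm, ← this]
  unfold linStat
  rw [← Finset.sum_sub_distrib]
  refine Finset.sum_congr rfl fun k _ => ?_
  simp only [Equiv.Perm.mul_apply]
  ring

lemma pair_sum {N : ℕ} (g h : Fin N → ℝ) (hg : ∑ i, g i = 0) :
    ∑ i, ∑ j, (g i - g j) * (h i - h j) = 2 * N * ∑ i, g i * h i := by
  have : ∀ i j, (g i - g j) * (h i - h j) = g i * h i - g i * h j - g j * h i + g j * h j := by
    intros; ring
  simp only [this, Finset.sum_add_distrib, Finset.sum_sub_distrib, ← Finset.mul_sum,
    ← Finset.sum_mul, hg]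
  simp only [Finset.sum_const, Finset.card_univ, Fintype.card_fin, nsmul_eq_mul,
    zero_mul]
  simp only [mul_zero, sub_zero, zero_add, Finset.mul_sum]
  rw [← Finset.sum_add_distrib]
  refine Finset.sum_congr rfl fun x _ => ?_
  ring

lemma linStat_moment (k : ℕ) : ∃ C : ℝ, 0 ≤ C ∧ ∀ (N : ℕ) (_ : 0 < N) (α β : Fin N → ℝ)
    (_ : ∑ i, α i = 0) (_ : ∀ i, |α i| ≤ 3) (_ : ∀ i, |β i| ≤ 3),
    permE N (fun π => linStat α β π ^ (2 * k)) ≤ C * (N : ℝ) ^ k := by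
  obtain ⟨C, hC, h⟩ := gen_moment k
  refine ⟨C * (36 ^ 2) ^ k, by positivity, ?_⟩
  intro N hN α β h0 hα hβ
  have := h N hN (linStat α β) 2 36 0 (by norm_num) le_rfl ?_ ?_
  · refine this.trans (le_of_eq ?_)
    rw [mul_assoc, ← mul_pow]; ring
  · intro π i j
    rw [linStat_diff, abs_mul]
    have h1 : |α i - α j| ≤ 6 := (abs_sub _ _).trans (by linarith [hα i, hα j])
    have h2 : |β (π i) - β (π j)| ≤ 6 := (abs_sub _ _).trans (by linarith [hβ (π i), hβ (π j)])
    calc _ ≤ (6:ℝ) * 6 := by gcongr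
      _ = 36 := by norm_num
  · intro π
    simp only [linStat_diff]
    rw [pair_sum α (fun i => β (π i)) h0]
    simp [linStat]

lemma pair_sq_sum {N : ℕ} (α β : Fin N → ℝ) (hα : ∑ i, α i = 0) (hβ : ∑ i, β i = 0) :
    ∑ i, ∑ j, ((α i - α j) * (β i - β j)) ^ 2 =
      2 * N * ∑ i, α i ^ 2 * β i ^ 2 + 2 * ((∑ i, α i ^ 2) * ∑ i, β i ^ 2)
        + 4 * (∑ i, α i * β i) ^ 2 := by
  set A := ∑ i, α i ^ 2 with hA
  set B := ∑ i, β i ^ 2 with hB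
  set S := ∑ i, α i * β i with hS
  set W := ∑ i, α i ^ 2 * β i ^ 2 with hW
  set X := ∑ i, α i * β i ^ 2 with hX
  set Y := ∑ i, α i ^ 2 * β i with hY
  have h1 : ∀ i, ∑ j, ((α i - α j) * (β i - β j)) ^ 2 =
      N * (α i ^ 2 * β i ^ 2) + B * α i ^ 2 + 4 * S * (α i * β i) - 2 * X * α i
        + A * β i ^ 2 - 2 * Y * β i + W := by
    intro i
    have : ∀ j, ((α i - α j) * (β i - β j)) ^ 2 =
        α i ^ 2 * β i ^ 2 - (2 * α i ^ 2 * β i) * β j + α i ^ 2 * β j ^ 2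
        - (2 * α i * β i ^ 2) * α j + (4 * α i * β i) * (α j * β j) - (2 * α i) * (α j * β j ^ 2)
        + β i ^ 2 * α j ^ 2 - (2 * β i) * (α j ^ 2 * β j) + α j ^ 2 * β j ^ 2 := by
      intro j; ring
    simp only [this, Finset.sum_add_distrib, Finset.sum_sub_distrib, ← Finset.mul_sum]
    rw [← hA, ← hB, ← hS, ← hW, ← hX, ← hY, hα, hβ]
    simp only [Finset.sum_const, Finset.card_univ, Fintype.card_fin, nsmul_eq_mul]
    ring
  simp only [h1, Finset.sum_add_distrib, Finset.sum_sub_distrib, ← Finset.mul_sum]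
  rw [← hA, ← hB, ← hS, ← hW, hα, hβ]
  simp only [Finset.sum_const, Finset.card_univ, Fintype.card_fin, nsmul_eq_mul]
  ring

lemma linStat_ident {N : ℕ} (α β : Fin N → ℝ) (h0 : ∑ i, α i = 0)
    (g : Equiv.Perm (Fin N) → ℝ) :
    2 * N * permE N (fun π => linStat α β π * g π) =
      ∑ i, ∑ j, (1 / 2) * permE N (fun π => (linStat α β π - linStat α β (π * Equiv.swap i j)) *
        (g π - g (π * Equiv.swap i j))) := by
  simp only [← permE_exch]
  simp only [← permE_sum, ← permE_mul]
  congr 1; ext π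
  simp only [linStat_diff, ← Finset.sum_mul]
  rw [pair_sum α (fun i => β (π i)) h0]
  simp only [linStat]
  ring

lemma sum_abs_le {N : ℕ} (f : Fin N → ℝ) (c : ℝ) (h : ∀ i, |f i| ≤ c) : |∑ i, f i| ≤ N * c := by
  refine (Finset.abs_sum_le_sum_abs _ _).trans ?_
  refine (Finset.sum_le_sum fun i _ => h i).trans ?_
  simp

lemma linStat_odd (m : ℕ) : ∃ C : ℝ, 0 ≤ C ∧ ∀ (N : ℕ) (_ : 0 < N) (α β : Fin N → ℝ)
    (_ : ∑ i, α i = 0) (_ : ∑ i, β i = 0) (_ : ∀ i, |α i| ≤ 1) (_ : ∀ i, |β i| ≤ 1),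
    |permE N (fun π => linStat α β π ^ (2 * m + 1))| ≤ C * (N : ℝ) ^ m := by
  induction m with
  | zero =>
    refine ⟨0, le_rfl, ?_⟩
    intro N hN α β hα hβ _ _
    have h := linStat_ident α β hα (fun _ => 1)
    have hN' : (0:ℝ) < N := by exact_mod_cast hN
    simp only [mul_one, sub_self, mul_zero, permE_const, Finset.sum_const_zero] at h
    have : permE N (fun π => linStat α β π) = 0 := by
      rcases mul_eq_zero.mp h with h | h
      · exfalso; linarith
      · exact h
    simp [this]
  | succ m ih =>
    obtain ⟨C1, hC1, ih⟩ := ih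
    obtain ⟨C0, hC0, h0⟩ := linStat_moment m
    obtain ⟨C2, hC2, h2⟩ := linStat_moment (m + 1)
    refine ⟨(1 / 4) * ((2 * m + 2) * (4 * C2 + 4 * C1 + 4 * C2) + 128 * (2 * m + 2) ^ 2 * C0),
      by positivity, ?_⟩
    intro N hN α β hα hβ bα bβ
    have hN' : (0:ℝ) < N := by exact_mod_cast hN
    have b3α : ∀ i, |α i| ≤ 3 := fun i => (bα i).trans (by norm_num)
    have b3β : ∀ i, |β i| ≤ 3 := fun i => (bβ i).trans (by norm_num)
    specialize ih N hN α β hα hβ bα bβ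
    have h0L := h0 N hN α β hα b3α b3β
    have h2L := h2 N hN α β hα b3α b3β
    set L := linStat α β with hL
    set A := ∑ i, α i ^ 2 with hA
    set B := ∑ i, β i ^ 2 with hB
    have hA0 : 0 ≤ A := Finset.sum_nonneg fun i _ => sq_nonneg _
    have hB0 : 0 ≤ B := Finset.sum_nonneg fun i _ => sq_nonneg _
    have sα : ∀ i, |α i ^ 2| ≤ 1 := fun i => by
      rw [abs_pow]; exact pow_le_one₀ (abs_nonneg _) (bα i)
    have sβ : ∀ i, |β i ^ 2| ≤ 1 := fun i => by
      rw [abs_pow]; exact pow_le_one₀ (abs_nonneg _) (bβ i)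
    have hAN : A ≤ N := by
      have := sum_abs_le _ 1 sα
      linarith [le_abs_self (∑ i, α i ^ 2)]
    have hBN : B ≤ N := by
      have := sum_abs_le _ 1 sβ
      linarith [le_abs_self (∑ i, β i ^ 2)]
    set W := linStat (fun i => α i ^ 2 - A / N) (fun i => β i ^ 2) with hW
    have h2W : permE N (fun π => W π ^ (2 * (m + 1))) ≤ C2 * N ^ (m + 1) := by
      apply h2 N hN
      · rw [Finset.sum_sub_distrib, ← hA]
        simp only [Finset.sum_const, Finset.card_univ, Fintype.card_fin, nsmul_eq_mul]
        field_simp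
        ring
      · intro i
        refine (abs_sub _ _).trans ?_
        have : |A / N| ≤ 1 := by
          rw [abs_of_nonneg (by positivity), div_le_one hN']; exact hAN
        linarith [sα i]
      · intro i; linarith [sβ i]
    have hWe : ∀ π, ∑ i, ∑ j, (L π - L (π * Equiv.swap i j)) ^ 2 =
        2 * N * W π + 4 * (A * B) + 4 * L π ^ 2 := by
      intro π
      have sumβ : ∑ i, β (π i) = 0 := by rw [Equiv.sum_comp π β, hβ]
      have sumβ2 : ∑ i, β (π i) ^ 2 = B := by rw [Equiv.sum_comp π (fun i => β i ^ 2)]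
      simp only [hL, linStat_diff]
      rw [pair_sq_sum α (fun i => β (π i)) hα sumβ, sumβ2, ← hA]
      have : W π = ∑ i, α i ^ 2 * β (π i) ^ 2 - A / N * B := by
        rw [hW]
        simp only [linStat, sub_mul, Finset.sum_sub_distrib, ← Finset.mul_sum]
        rw [sumβ2]
      rw [this]
      simp only [linStat]
      field_simp
      ring
    have hLN : ∀ π, |L π| ≤ N := by
      intro π
      have := sum_abs_le (fun i => α i * β (π i)) 1 (fun i => by
        rw [abs_mul]; exact mul_le_one₀ (bα i) (abs_nonneg _) (bβ _))
      rw [hL]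
      simpa [linStat] using this
    have hD : ∀ π i j, |L π - L (π * Equiv.swap i j)| ≤ 4 := by
      intro π i j
      rw [hL, linStat_diff, abs_mul]
      have h1 : |α i - α j| ≤ 2 := (abs_sub _ _).trans (by linarith [bα i, bα j])
      have h2 : |β (π i) - β (π j)| ≤ 2 := (abs_sub _ _).trans (by linarith [bβ (π i), bβ (π j)])
      calc _ ≤ (2:ℝ) * 2 := by gcongr
        _ = 4 := by norm_num
    -- error terms
    set e : Fin N → Fin N → Equiv.Perm (Fin N) → ℝ := fun i j π =>
      (L π - L (π * Equiv.swap i j)) * (L π ^ (2 * m + 2) - L (π * Equiv.swap i j) ^ (2 * m + 2)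
        - (2 * m + 2) * (L π - L (π * Equiv.swap i j)) * L π ^ (2 * m + 1)) with he
    have heb : ∀ i j, |permE N (e i j)| ≤ 128 * (2 * m + 2) ^ 2 * (C0 * N ^ m) := by
      intro i j
      refine (permE_abs _ _).trans ?_
      have : ∀ π, |e i j π| ≤ 64 * (2 * m + 2) ^ 2 *
          (L π ^ (2 * m) + L (π * Equiv.swap i j) ^ (2 * m)) := by
        intro π
        have a1 := second_order (L π) (L (π * Equiv.swap i j)) (2 * m)
        have a2 := max_abs_pow_le (L π) (L (π * Equiv.swap i j)) m
        have a3 := hD π i j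
        rw [he]
        simp only [abs_mul]
        push_cast at a1
        calc _ ≤ 4 * ((2 * m + 2) ^ 2 * 4 ^ 2 *
            (L π ^ (2 * m) + L (π * Equiv.swap i j) ^ (2 * m))) := by
              gcongr
              refine a1.trans ?_
              rw [← sq_abs (L π - L (π * Equiv.swap i j))]
              gcongr
          _ = _ := by ring
      refine (permE_mono N this).trans ?_
      rw [permE_mul, permE_add, permE_swap N (fun π => L π ^ (2 * m))]
      have : (0:ℝ) ≤ 64 * (2 * m + 2) ^ 2 := by positivity
      nlinarith
    have main : 2 * N * permE N (fun π => L π ^ (2 * (m + 1) + 1)) =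
        (1 / 2) * ((2 * m + 2) * (2 * N * permE N (fun π => W π * L π ^ (2 * m + 1))
          + 4 * (A * B) * permE N (fun π => L π ^ (2 * m + 1))
          + 4 * permE N (fun π => L π ^ (2 * m + 3))) + ∑ i, ∑ j, permE N (e i j)) := by
      have e1 : permE N (fun π => L π ^ (2 * (m + 1) + 1)) =
          permE N (fun π => L π * L π ^ (2 * m + 2)) := by
        congr 1; ext π; ring
      rw [e1, hL, linStat_ident α β hα (fun π => linStat α β π ^ (2 * m + 2)), ← hL]
      simp only [← permE_mul, ← permE_sum, ← permE_add]
      congr 1; ext π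
      have e2 : 2 * N * (W π * L π ^ (2 * m + 1)) + 4 * (A * B) * L π ^ (2 * m + 1) +
          4 * L π ^ (2 * m + 3) = ∑ i, ∑ j, (L π - L (π * Equiv.swap i j)) ^ 2 * L π ^ (2 * m + 1) := by
        simp only [← Finset.sum_mul, hWe]; ring
      rw [e2]
      simp only [Finset.mul_sum, ← Finset.sum_add_distrib]
      refine Finset.sum_congr rfl fun i _ => Finset.sum_congr rfl fun j _ => ?_
      simp only [he]
      ring
    have b1 : |permE N (fun π => W π * L π ^ (2 * m + 1))| ≤ 2 * C2 * N ^ (m + 1) := by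
      refine (permE_abs _ _).trans ?_
      have : ∀ π, |W π * L π ^ (2 * m + 1)| ≤ W π ^ (2 * (m + 1)) + L π ^ (2 * (m + 1)) := by
        intro π
        refine le_trans ?_ (max_abs_pow_le (W π) (L π) (m + 1))
        rw [abs_mul, abs_pow]
        calc _ ≤ (max |W π| |L π|) * (max |W π| |L π|) ^ (2 * m + 1) := by
              gcongr
              · exact le_max_left _ _
              · exact le_max_right _ _
          _ = _ := by ring
      refine (permE_mono N this).trans ?_
      rw [permE_add]
      linarith
    have b2 : |A * B * permE N (fun π => L π ^ (2 * m + 1))| ≤ C1 * N ^ (m + 2) := by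
      rw [abs_mul, abs_of_nonneg (by positivity)]
      calc _ ≤ (N : ℝ) * N * (C1 * N ^ m) := by gcongr
        _ = _ := by ring
    have b3 : |permE N (fun π => L π ^ (2 * m + 3))| ≤ C2 * N ^ (m + 2) := by
      refine (permE_abs _ _).trans ?_
      have : ∀ π, |L π ^ (2 * m + 3)| ≤ N * L π ^ (2 * (m + 1)) := by
        intro π
        rw [← (even_two_mul (m+1)).pow_abs (L π), abs_pow]
        calc _ = |L π| * |L π| ^ (2 * (m + 1)) := by ring
          _ ≤ _ := by gcongr; exact hLN π
      refine (permE_mono N this).trans ?_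
      rw [permE_mul]
      calc _ ≤ (N:ℝ) * (C2 * N ^ (m + 1)) := by gcongr
        _ = _ := by ring
    have b4 : |∑ i, ∑ j, permE N (e i j)| ≤ N * (N * (128 * (2 * m + 2) ^ 2 * (C0 * N ^ m))) :=
      sum_abs_le _ _ fun i => sum_abs_le _ _ fun j => heb i j
    set E3 := permE N (fun π => L π ^ (2 * m + 3))
    set E2 := permE N (fun π => L π ^ (2 * m + 1))
    set E1 := permE N (fun π => W π * L π ^ (2 * m + 1))
    set E4 := ∑ i, ∑ j, permE N (e i j)
    set E5 := permE N (fun π => L π ^ (2 * (m + 1) + 1))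
    have fin : |2 * N * E5| ≤ (1 / 2) * ((2 * m + 2) * (2 * N * (2 * C2 * N ^ (m + 1))
          + 4 * (C1 * N ^ (m + 2)) + 4 * (C2 * N ^ (m + 2)))
          + N * (N * (128 * (2 * m + 2) ^ 2 * (C0 * N ^ m)))) := by
      rw [main]
      have q1 : |2 * N * E1| ≤ 2 * N * (2 * C2 * N ^ (m + 1)) := by
        rw [abs_mul, abs_of_nonneg (by positivity : (0:ℝ) ≤ 2 * N)]; gcongr
      have q2 : |4 * (A * B) * E2| ≤ 4 * (C1 * N ^ (m + 2)) := by
        rw [mul_assoc, abs_mul, abs_of_nonneg (by positivity : (0:ℝ) ≤ 4)]; gcongr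
      have q3 : |4 * E3| ≤ 4 * (C2 * N ^ (m + 2)) := by
        rw [abs_mul, abs_of_nonneg (by positivity : (0:ℝ) ≤ 4)]; gcongr
      rw [abs_mul, abs_of_nonneg (by norm_num : (0:ℝ) ≤ 1 / 2)]
      gcongr
      refine (abs_add_le _ _).trans ?_
      rw [abs_mul, abs_of_nonneg (by positivity : (0:ℝ) ≤ 2 * m + 2)]
      gcongr
      refine (abs_add_le _ _).trans ?_
      refine add_le_add ((abs_add_le _ _).trans ?_) q3
      exact add_le_add q1 q2
    rw [abs_mul, abs_of_nonneg (by positivity : (0:ℝ) ≤ 2 * N)] at fin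
    have : 2 * N * |E5| ≤ 2 * N * ((1 / 4) * ((2 * m + 2) * (4 * C2 + 4 * C1 + 4 * C2) +
        128 * (2 * m + 2) ^ 2 * C0) * (N : ℝ) ^ (m + 1)) := by
      refine fin.trans (le_of_eq ?_)
      ring
    exact le_of_mul_le_mul_left this (by positivity)

/-- Leading part of the increment of the quadratic statistic. -/
noncomputable def incT {N : ℕ} (p q : Fin N → Fin N → ℝ) (π : Equiv.Perm (Fin N))
    (i j : Fin N) : ℝ :=
  2 * ∑ k, (p i k - p j k) * (q (π i) (π k) - q (π j) (π k))

lemma quad_diff {N : ℕ} (p q : Fin N → Fin N → ℝ) (hp : ∀ i j, p i j = p j i)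
    (hq : ∀ i j, q i j = q j i) (π : Equiv.Perm (Fin N)) (i j : Fin N) :
    gammaStat N p q π - gammaStat N p q (π * Equiv.swap i j) =
      incT p q π i j - ((q (π i) (π i) - q (π j) (π i)) - (q (π i) (π j) - q (π j) (π j))) *
        ((p i i - p j i) - (p i j - p j j)) := by
  set M : Fin N → Fin N → ℝ := fun k l => q (π k) (π l) with hM
  set τ := Equiv.swap i j with hτ
  have hMs : ∀ k l, M k l = M l k := fun k l => hq _ _
  have e0 : gammaStat N p q π - gammaStat N p q (π * τ) =
      (∑ k, ∑ l, (M k l - M (τ k) l) * p k l) + ∑ k, ∑ l, (M (τ k) l - M (τ k) (τ l)) * p k l := by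
    simp only [gammaStat, ← Finset.sum_add_distrib, ← Finset.sum_sub_distrib]
    refine Finset.sum_congr rfl fun k _ => Finset.sum_congr rfl fun l _ => ?_
    simp only [Equiv.Perm.mul_apply, hM]
    ring
  have e1 : (∑ k, ∑ l, (M k l - M (τ k) l) * p k l) =
      ∑ l, (M i l - M j l) * (p i l - p j l) := by
    rw [Finset.sum_comm]
    refine Finset.sum_congr rfl fun l _ => ?_
    exact swap_sum i j (fun k => M k l) (fun k => p k l)
  have e2 : (∑ k, ∑ l, (M (τ k) l - M (τ k) (τ l)) * p k l) =
      ∑ k, (M i (τ k) - M j (τ k)) * (p i k - p j k) := by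
    refine Finset.sum_congr rfl fun k _ => ?_
    rw [hMs i, hMs j, hp i k, hp j k]
    exact swap_sum i j (fun l => M (τ k) l) (fun l => p k l)
  have e3 := swap_sum i j (fun k => M i k - M j k) (fun k => p i k - p j k)
  have e4 : ∑ k, (M i k - M j k - (M i (τ k) - M j (τ k))) * (p i k - p j k) =
      (∑ l, (M i l - M j l) * (p i l - p j l)) - ∑ k, (M i (τ k) - M j (τ k)) * (p i k - p j k) := by
    rw [← Finset.sum_sub_distrib]
    refine Finset.sum_congr rfl fun k _ => ?_
    ring
  have e5 : incT p q π i j = 2 * ∑ l, (M i l - M j l) * (p i l - p j l) := by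
    unfold incT
    congr 1
    refine Finset.sum_congr rfl fun k _ => ?_
    simp only [hM]; ring
  rw [← hτ, e4] at e3
  rw [e0, e1, e2, e5]
  simp only [hM] at e3 ⊢
  linarith

lemma quad_diff_bound {N : ℕ} (p q : Fin N → Fin N → ℝ) (hp : ∀ i j, p i j = p j i)
    (hq : ∀ i j, q i j = q j i) (bp : ∀ i j, |p i j| ≤ 3) (bq : ∀ i j, |q i j| ≤ 3)
    (π : Equiv.Perm (Fin N)) (i j : Fin N) :
    |incT p q π i j - (gammaStat N p q π - gammaStat N p q (π * Equiv.swap i j))| ≤ 144 := by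
  rw [quad_diff p q hp hq, sub_sub_cancel, abs_mul]
  have h1 : ∀ x y z w : ℝ, |x| ≤ 3 → |y| ≤ 3 → |z| ≤ 3 → |w| ≤ 3 → |(x - y) - (z - w)| ≤ 12 := by
    intro x y z w hx hy hz hw
    rw [abs_le] at *
    constructor <;> linarith
  calc _ ≤ (12:ℝ) * 12 := by
        gcongr
        · exact h1 _ _ _ _ (bq _ _) (bq _ _) (bq _ _) (bq _ _)
        · exact h1 _ _ _ _ (bp _ _) (bp _ _) (bp _ _) (bp _ _)
    _ = 144 := by norm_num

lemma incT_sum {N : ℕ} (p q : Fin N → Fin N → ℝ) (hp : ∀ i j, p i j = p j i)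
    (p0 : ∀ i, ∑ j, p i j = 0) (π : Equiv.Perm (Fin N)) :
    ∑ i, ∑ j, incT p q π i j = 4 * N * gammaStat N p q π := by
  unfold incT
  simp only [← Finset.mul_sum]
  have : ∑ i, ∑ j, ∑ k, (p i k - p j k) * (q (π i) (π k) - q (π j) (π k)) =
      ∑ k, ∑ i, ∑ j, (p i k - p j k) * (q (π i) (π k) - q (π j) (π k)) := by
    rw [Finset.sum_comm]
    rw [Finset.sum_comm (s := univ) (t := univ) (f := fun k i => ∑ j, (p i k - p j k) * (q (π i) (π k) - q (π j) (π k)))]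
    rw [Finset.sum_comm]
    refine Finset.sum_congr rfl fun i _ => ?_
    rw [Finset.sum_comm]
  rw [this]
  have h : ∀ k, ∑ i, ∑ j, (p i k - p j k) * (q (π i) (π k) - q (π j) (π k)) =
      2 * N * ∑ i, p i k * q (π i) (π k) := by
    intro k
    refine pair_sum (fun i => p i k) (fun i => q (π i) (π k)) ?_
    simp only [hp _ k, p0]
  simp only [h, ← Finset.mul_sum]
  unfold gammaStat
  rw [Finset.sum_comm]
  ring

lemma incT_bound {N : ℕ} (p q : Fin N → Fin N → ℝ)
    (bp : ∀ i j, |p i j| ≤ 3) (bq : ∀ i j, |q i j| ≤ 3)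
    (π : Equiv.Perm (Fin N)) (i j : Fin N) : |incT p q π i j| ≤ 72 * N := by
  unfold incT
  rw [abs_mul]
  have := sum_abs_le (fun k => (p i k - p j k) * (q (π i) (π k) - q (π j) (π k))) 36 (fun k => by
    rw [abs_mul]
    have h1 : |p i k - p j k| ≤ 6 := (abs_sub _ _).trans (by linarith [bp i k, bp j k])
    have h2 : |q (π i) (π k) - q (π j) (π k)| ≤ 6 :=
      (abs_sub _ _).trans (by linarith [bq (π i) (π k), bq (π j) (π k)])
    calc _ ≤ (6:ℝ) * 6 := by gcongr
      _ = 36 := by norm_num)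
  rw [abs_of_nonneg (by norm_num : (0:ℝ) ≤ 2)]
  linarith

lemma quad_rem {N : ℕ} (p q : Fin N → Fin N → ℝ) (hp : ∀ i j, p i j = p j i)
    (hq : ∀ i j, q i j = q j i) (bp : ∀ i j, |p i j| ≤ 3) (bq : ∀ i j, |q i j| ≤ 3)
    (p0 : ∀ i, ∑ j, p i j = 0) (π : Equiv.Perm (Fin N)) :
    |4 * N * gammaStat N p q π - ∑ i, ∑ j,
      (gammaStat N p q π - gammaStat N p q (π * Equiv.swap i j))| ≤ (N : ℝ) ^ 2 * 144 := by
  rw [← incT_sum p q hp p0]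
  simp only [← Finset.sum_sub_distrib]
  have := sum_abs_le _ _ fun i => sum_abs_le _ _ fun j => quad_diff_bound p q hp hq bp bq π i j
  refine this.trans (le_of_eq (by ring))

lemma quad_moment (k : ℕ) : ∃ C : ℝ, 0 ≤ C ∧ ∀ (N : ℕ) (_ : 0 < N) (p q : Fin N → Fin N → ℝ)
    (_ : ∀ i j, p i j = p j i) (_ : ∀ i j, q i j = q j i)
    (_ : ∀ i j, |p i j| ≤ 3) (_ : ∀ i j, |q i j| ≤ 3)
    (_ : ∀ i, ∑ j, p i j = 0),
    permE N (fun π => gammaStat N p q π ^ (2 * k)) ≤ C * (N : ℝ) ^ (3 * k) := by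
  obtain ⟨C, hC, h⟩ := gen_moment k
  refine ⟨C * (216 ^ 2 + 144 ^ 2) ^ k, by positivity, ?_⟩
  intro N hN p q hp hq bp bq p0
  have hN' : (1:ℝ) ≤ N := by exact_mod_cast hN
  have := h N hN (gammaStat N p q) 4 (216 * N) 144 (by norm_num) (by norm_num) ?_
    (quad_rem p q hp hq bp bq p0)
  · refine this.trans ?_
    have h23 : (N:ℝ) ^ 2 ≤ N ^ 3 := pow_le_pow_right₀ hN' (by norm_num)
    calc _ ≤ C * ((216 ^ 2 + 144 ^ 2) * (N:ℝ) ^ 3) ^ k := by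
          gcongr
          nlinarith
      _ = _ := by rw [mul_pow, pow_mul]; ring
  · intro π i j
    have h1 := quad_diff_bound p q hp hq bp bq π i j
    have h2 := incT_bound p q bp bq π i j
    rw [abs_le] at *
    constructor <;> linarith

lemma incT_fourth : ∃ C : ℝ, 0 ≤ C ∧ ∀ (N : ℕ) (_ : 0 < N) (p q : Fin N → Fin N → ℝ)
    (_ : ∀ i j, |p i j| ≤ 3) (_ : ∀ i j, |q i j| ≤ 3)
    (_ : ∀ i, ∑ j, p i j = 0) (i j : Fin N),
    permE N (fun π => incT p q π i j ^ 4) ≤ C * (N : ℝ) ^ 3 := by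
  obtain ⟨C, hC, h⟩ := linStat_moment 2
  refine ⟨4096 * C, by positivity, ?_⟩
  intro N hN p q bp bq p0 i j
  have hX : ∀ i, permE N (fun π => ∑ t, linStat (p i) (q t) π ^ 4) ≤ C * (N : ℝ) ^ 3 := by
    intro i
    rw [permE_sum]
    refine (Finset.sum_le_sum fun t _ => h N hN (p i) (q t) (p0 i) (bp i) (bq t)).trans ?_
    simp only [Finset.sum_const, Finset.card_univ, Fintype.card_fin, nsmul_eq_mul]
    exact le_of_eq (by ring)
  have hle : ∀ i (t : Fin N) π, linStat (p i) (q t) π ^ 4 ≤ ∑ t, linStat (p i) (q t) π ^ 4 :=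
    fun i t π => Finset.single_le_sum (f := fun t => linStat (p i) (q t) π ^ 4)
      (fun t _ => by positivity) (Finset.mem_univ t)
  have hT : ∀ π, incT p q π i j ^ 4 ≤ 2048 * ((∑ t, linStat (p i) (q t) π ^ 4) +
      ∑ t, linStat (p j) (q t) π ^ 4) := by
    intro π
    have e : incT p q π i j = 2 * (linStat (p i) (q (π i)) π - linStat (p i) (q (π j)) π
        - linStat (p j) (q (π i)) π + linStat (p j) (q (π j)) π) := by
      simp only [incT, linStat, ← Finset.sum_sub_distrib, ← Finset.sum_add_distrib]
      congr 1
      refine Finset.sum_congr rfl fun k _ => ?_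
      ring
    rw [e]
    have i1 := hle i (π i) π
    have i2 := hle i (π j) π
    have i3 := hle j (π i) π
    have i4 := hle j (π j) π
    have q4 : ∀ x y z w : ℝ, (2 * (x - y - z + w)) ^ 4 ≤ 1024 * (x ^ 4 + y ^ 4 + z ^ 4 + w ^ 4) := by
      intro x y z w
      have s1 : (x - y - z + w) ^ 2 ≤ 4 * (x ^ 2 + y ^ 2 + z ^ 2 + w ^ 2) := by
        nlinarith [sq_nonneg (x + y), sq_nonneg (x + z), sq_nonneg (x - w), sq_nonneg (y - z),
          sq_nonneg (y + w), sq_nonneg (z + w)]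
      have s2 : (x ^ 2 + y ^ 2 + z ^ 2 + w ^ 2) ^ 2 ≤ 4 * (x ^ 4 + y ^ 4 + z ^ 4 + w ^ 4) := by
        nlinarith [sq_nonneg (x ^ 2 - y ^ 2), sq_nonneg (x ^ 2 - z ^ 2), sq_nonneg (x ^ 2 - w ^ 2),
          sq_nonneg (y ^ 2 - z ^ 2), sq_nonneg (y ^ 2 - w ^ 2), sq_nonneg (z ^ 2 - w ^ 2)]
      calc (2 * (x - y - z + w)) ^ 4 = 16 * ((x - y - z + w) ^ 2) ^ 2 := by ring
        _ ≤ 16 * (4 * (x ^ 2 + y ^ 2 + z ^ 2 + w ^ 2)) ^ 2 := by gcongr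
        _ = 256 * (x ^ 2 + y ^ 2 + z ^ 2 + w ^ 2) ^ 2 := by ring
        _ ≤ _ := by linarith
    refine (q4 _ _ _ _).trans ?_
    linarith
  refine (permE_mono N hT).trans ?_
  rw [permE_mul, permE_add]
  linarith [hX i, hX j]

lemma quad_second : ∃ C : ℝ, 0 ≤ C ∧ ∀ (N : ℕ) (_ : 0 < N) (p q : Fin N → Fin N → ℝ)
    (_ : ∀ i j, p i j = p j i) (_ : ∀ i j, q i j = q j i)
    (_ : ∀ i j, |p i j| ≤ 3) (_ : ∀ i j, |q i j| ≤ 3)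
    (_ : ∀ i, ∑ j, p i j = 0),
    permE N (fun π => gammaStat N p q π ^ 2) ≤ C * (√N) ^ 5 := by
  obtain ⟨C4, hC4, h4⟩ := incT_fourth
  obtain ⟨C2, hC2, h2⟩ := quad_moment 1
  refine ⟨(1 + C4) / 2 + 144 ^ 2 + 72 * (1 + C2), by positivity, ?_⟩
  intro N hN p q hp hq bp bq p0
  have hN' : (1:ℝ) ≤ N := by exact_mod_cast hN
  set s := √(N:ℝ) with hs
  have hs1 : 1 ≤ s := Real.one_le_sqrt.mpr hN'
  have hsN : (N:ℝ) = s ^ 2 := (Real.sq_sqrt (by linarith)).symm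
  have hs0 : 0 < s := by linarith
  set f := gammaStat N p q with hf
  have am : ∀ x : ℝ, |x| ≤ (1 / 2) * (s ^ 3 + x ^ 2 / s ^ 3) := by
    intro x
    have : 0 ≤ (|x| - s ^ 3) ^ 2 / s ^ 3 := by positivity
    have e : (|x| - s ^ 3) ^ 2 / s ^ 3 = x ^ 2 / s ^ 3 - 2 * |x| + s ^ 3 := by
      rw [← sq_abs x]; field_simp; ring
    linarith
  have hfabs : permE N (fun π => |f π|) ≤ (1 + C2) / 2 * s ^ 3 := by
    refine (permE_mono N fun π => am (f π)).trans ?_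
    have e : permE N (fun π => 1 / 2 * (s ^ 3 + f π ^ 2 / s ^ 3)) =
        1 / 2 * (s ^ 3 + (1 / s ^ 3) * permE N (fun π => f π ^ (2 * 1))) := by
      rw [permE_mul, permE_add, permE_const, ← permE_mul]
      congr 3; ext π; ring
    rw [e]
    have := h2 N hN p q hp hq bp bq p0
    have : (1 / s ^ 3) * permE N (fun π => f π ^ (2 * 1)) ≤ C2 * s ^ 3 := by
      calc _ ≤ (1 / s ^ 3) * (C2 * (N:ℝ) ^ (3 * 1)) := by gcongr
        _ = _ := by rw [hsN]; field_simp; ring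
    linarith
  have hT2 : ∀ i j, permE N (fun π => incT p q π i j ^ 2) ≤ (1 + C4) / 2 * s ^ 3 := by
    intro i j
    have : ∀ π, incT p q π i j ^ 2 ≤ 1 / 2 * (s ^ 3 + 1 / s ^ 3 * incT p q π i j ^ 4) := by
      intro π
      have := am (incT p q π i j ^ 2)
      rw [abs_of_nonneg (sq_nonneg _)] at this
      refine this.trans (le_of_eq ?_)
      ring
    refine (permE_mono N this).trans ?_
    rw [permE_mul, permE_add, permE_const, permE_mul]
    have := h4 N hN p q bp bq p0 i j
    have : (1 / s ^ 3) * permE N (fun π => incT p q π i j ^ 4) ≤ C4 * s ^ 3 := by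
      calc _ ≤ (1 / s ^ 3) * (C4 * (N:ℝ) ^ 3) := by gcongr
        _ = _ := by rw [hsN]; field_simp
    linarith
  have hD2 : ∀ i j, permE N (fun π => (f π - f (π * Equiv.swap i j)) * f π) ≤
      ((1 + C4) / 2 + 144 ^ 2) * s ^ 3 := by
    intro i j
    rw [permE_exch N f f]
    have : ∀ π, (f π - f (π * Equiv.swap i j)) * (f π - f (π * Equiv.swap i j)) ≤
        2 * incT p q π i j ^ 2 + 2 * 144 ^ 2 := by
      intro π
      have h1 := quad_diff_bound p q hp hq bp bq π i j
      rw [← hf] at h1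
      set T := incT p q π i j
      set D := f π - f (π * Equiv.swap i j)
      have h3 : (T - D) ^ 2 ≤ 144 ^ 2 := sq_le_sq' (by linarith [(abs_le.mp h1).1]) (abs_le.mp h1).2
      nlinarith [sq_nonneg (T + (T - D))]
    have h5 := permE_mono N this
    rw [permE_add, permE_mul, permE_const] at h5
    have h6 := hT2 i j
    have : (1:ℝ) ≤ s ^ 3 := one_le_pow₀ hs1
    linarith
  have pw : ∀ π, 4 * N * f π ^ 2 ≤ (∑ i, ∑ j, (f π - f (π * Equiv.swap i j)) * f π) +
      N ^ 2 * 144 * |f π| := by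
    intro π
    have h1 := quad_rem p q hp hq bp bq p0 π
    rw [← hf] at h1
    simp only [← Finset.sum_mul]
    set S := ∑ i, ∑ j, (f π - f (π * Equiv.swap i j))
    have : (4 * N * f π - S) * f π ≤ N ^ 2 * 144 * |f π| := by
      refine (le_abs_self _).trans ?_
      rw [abs_mul]
      gcongr
    linarith
  have h5 := permE_mono N pw
  rw [permE_mul, permE_add, permE_mul, permE_sum] at h5
  have h6 : ∑ i, permE N (fun π => ∑ j, (f π - f (π * Equiv.swap i j)) * f π) ≤
      N * (N * (((1 + C4) / 2 + 144 ^ 2) * s ^ 3)) := by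
    calc _ ≤ ∑ i : Fin N, (N : ℝ) * (((1 + C4) / 2 + 144 ^ 2) * s ^ 3) := by
          refine Finset.sum_le_sum fun i _ => ?_
          rw [permE_sum]
          refine (Finset.sum_le_sum fun j _ => hD2 i j).trans ?_
          simp
      _ = _ := by simp
  set F := permE N (fun π => f π ^ 2) with hF
  have hF0 : 0 ≤ F := permE_nonneg N fun π => sq_nonneg _
  have h7 : N ^ 2 * 144 * permE N (fun π => |f π|) ≤ N ^ 2 * 144 * ((1 + C2) / 2 * s ^ 3) := by
    gcongr
  have h8 : N * F ≤ N * (((1 + C4) / 2 + 144 ^ 2 + 72 * (1 + C2)) * s ^ 5) := by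
    have e : N * (((1 + C4) / 2 + 144 ^ 2 + 72 * (1 + C2)) * s ^ 5) =
      N * (N * (((1 + C4) / 2 + 144 ^ 2) * s ^ 3)) + N ^ 2 * 144 * ((1 + C2) / 2 * s ^ 3) := by
      rw [hsN]; ring
    have : 0 ≤ N * F := by positivity
    linarith
  exact le_of_mul_le_mul_left h8 (by linarith)

lemma decomp_sum {N : ℕ} (p q : Fin N → Fin N → ℝ) (α β : Fin N → ℝ)
    (hp : ∀ i j, p i j = p j i) (hq : ∀ i j, q i j = q j i)
    (p0 : ∀ i, ∑ j, p i j = 0) (q0 : ∀ i, ∑ j, q i j = 0)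
    (hα : ∑ i, α i = 0) (hβ : ∑ i, β i = 0) :
    ∑ i, ∑ j, (p i j + α i + α j) * (q i j + β i + β j) =
      2 * N * (∑ i, α i * β i) + ∑ i, ∑ j, p i j * q i j := by
  have h1 : ∀ i j, (p i j + α i + α j) * (q i j + β i + β j) =
      p i j * q i j + β i * p i j + p i j * β j + α i * q i j + α i * β i + α i * β j
      + q i j * α j + β i * α j + α j * β j := by intros; ring
  have z1 : ∑ i, ∑ j, p i j * β j = 0 := by
    rw [Finset.sum_comm]
    simp only [← Finset.sum_mul]
    refine Finset.sum_eq_zero fun y _ => ?_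
    have : ∑ i, p i y = 0 := by rw [← p0 y]; exact Finset.sum_congr rfl fun i _ => hp i y
    rw [this, zero_mul]
  have z2 : ∑ i, ∑ j, q i j * α j = 0 := by
    rw [Finset.sum_comm]
    simp only [← Finset.sum_mul]
    refine Finset.sum_eq_zero fun y _ => ?_
    have : ∑ i, q i y = 0 := by rw [← q0 y]; exact Finset.sum_congr rfl fun i _ => hq i y
    rw [this, zero_mul]
  simp only [h1, Finset.sum_add_distrib, z1, z2]
  simp only [← Finset.mul_sum, p0, q0, hα, hβ]
  simp only [Finset.sum_const, Finset.card_univ, Fintype.card_fin, nsmul_eq_mul,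
    mul_zero, add_zero]
  have e : ∑ x, α x * (N * β x) = N * ∑ x, α x * β x := by
    rw [Finset.mul_sum]
    exact Finset.sum_congr rfl fun x _ => by ring
  rw [e]
  ring

lemma gamma_decomp {N : ℕ} (hN : 0 < N) (a b : Fin N → Fin N → ℝ)
    (ha : ∀ i j, a i j = a j i) (hb : ∀ i j, b i j = b j i)
    (ha0 : ∑ i, ∑ j, a i j = 0) (hb0 : ∑ i, ∑ j, b i j = 0)
    (ba : ∀ i j, |a i j| ≤ 1) (bb : ∀ i j, |b i j| ≤ 1) :
    ∃ (α β : Fin N → ℝ) (p q : Fin N → Fin N → ℝ),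
      (∑ i, α i = 0) ∧ (∑ i, β i = 0) ∧ (∀ i, |α i| ≤ 1) ∧ (∀ i, |β i| ≤ 1) ∧
      (∀ i j, p i j = p j i) ∧ (∀ i j, q i j = q j i) ∧
      (∀ i j, |p i j| ≤ 3) ∧ (∀ i j, |q i j| ≤ 3) ∧ (∀ i, ∑ j, p i j = 0) ∧
      ∀ π, gammaStat N a b π = 2 * N * linStat α β π + gammaStat N p q π := by
  have hN' : (0:ℝ) < N := by exact_mod_cast hN
  have aux : ∀ a : Fin N → Fin N → ℝ, (∀ i j, a i j = a j i) → (∑ i, ∑ j, a i j = 0) →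
      (∀ i j, |a i j| ≤ 1) → ∃ (α : Fin N → ℝ) (p : Fin N → Fin N → ℝ), (∑ i, α i = 0) ∧
      (∀ i, |α i| ≤ 1) ∧ (∀ i j, p i j = p j i) ∧ (∀ i j, |p i j| ≤ 3) ∧ (∀ i, ∑ j, p i j = 0) ∧
      (∀ i j, a i j = p i j + α i + α j) := by
    intro a ha ha0 ba
    have b1 : ∀ i, |(∑ j, a i j) / N| ≤ 1 := by
      intro i
      rw [abs_div, abs_of_pos hN', div_le_one hN']
      simpa using sum_abs_le _ 1 (ba i)
    have s0 : ∑ i, (∑ j, a i j) / (N:ℝ) = 0 := by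
      rw [← Finset.sum_div, ha0, zero_div]
    refine ⟨fun i => (∑ j, a i j) / N, fun i j => a i j - (∑ k, a i k) / N - (∑ k, a j k) / N,
      s0, b1, ?_, ?_, ?_, ?_⟩
    · intro i j; simp only; rw [ha i j]; ring
    · intro i j
      have h1 := abs_le.mp (b1 i)
      have h2 := abs_le.mp (b1 j)
      have h3 := abs_le.mp (ba i j)
      rw [abs_le]
      constructor <;> linarith
    · intro i
      rw [Finset.sum_sub_distrib, Finset.sum_sub_distrib, s0]
      simp only [Finset.sum_const, Finset.card_univ, Fintype.card_fin, nsmul_eq_mul]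
      field_simp
      ring
    · intro i j; ring
  obtain ⟨α, p, hα, bα, hp, bp, p0, ea⟩ := aux a ha ha0 ba
  obtain ⟨β, q, hβ, bβ, hq, bq, q0, eb⟩ := aux b hb hb0 bb
  refine ⟨α, β, p, q, hα, hβ, bα, bβ, hp, hq, bp, bq, p0, ?_⟩
  intro π
  unfold gammaStat linStat
  simp only [ea, eb]
  refine decomp_sum p (fun i j => q (π i) (π j)) α (fun i => β (π i)) hp (fun i j => hq _ _) p0
    ?_ hα ?_
  · intro i
    rw [Equiv.sum_comp π (fun j => q (π i) j), q0]
  · rw [Equiv.sum_comp π β, hβ]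

lemma pow_diff_bound (m : ℕ) (x y : ℝ) :
    |(x + y) ^ (2 * m + 1) - x ^ (2 * m + 1)| ≤
      ((2 * m + 1) * (2 ^ (2 * m) + 1)) * (|y| * (x ^ (2 * m) + y ^ (2 * m))) := by
  have h1 := abs_pow_sub_pow_le (x + y) x (2 * m + 1)
  simp only [Nat.add_sub_cancel, add_sub_cancel_left] at h1
  push_cast at h1
  have hx : (0:ℝ) ≤ x ^ (2 * m) := (even_two_mul m).pow_nonneg x
  have hy : (0:ℝ) ≤ y ^ (2 * m) := (even_two_mul m).pow_nonneg y
  have h2 : (max |x + y| |x|) ^ (2 * m) ≤ (2 ^ (2 * m) + 1) * (x ^ (2 * m) + y ^ (2 * m)) := by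
    calc _ ≤ (2 * max |x| |y|) ^ (2 * m) := by
          gcongr
          refine max_le ((abs_add_le _ _).trans ?_) ?_
          · linarith [le_max_left |x| |y|, le_max_right |x| |y|]
          · linarith [le_max_left |x| |y|, abs_nonneg x]
      _ = 2 ^ (2 * m) * (max |x| |y|) ^ (2 * m) := mul_pow _ _ _
      _ ≤ 2 ^ (2 * m) * (x ^ (2 * m) + y ^ (2 * m)) := by
          gcongr; exact max_abs_pow_le x y m
      _ ≤ _ := by nlinarith
  refine h1.trans ?_
  calc _ ≤ |y| * (2 * m + 1) * ((2 ^ (2 * m) + 1) * (x ^ (2 * m) + y ^ (2 * m))) := by gcongr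
    _ = _ := by ring

lemma bounded_main (m : ℕ) : ∃ C : ℝ, 0 ≤ C ∧ ∀ (N : ℕ) (_ : 0 < N) (a b : Fin N → Fin N → ℝ)
    (_ : ∀ i j, a i j = a j i) (_ : ∀ i j, b i j = b j i)
    (_ : ∑ i, ∑ j, a i j = 0) (_ : ∑ i, ∑ j, b i j = 0)
    (_ : ∀ i j, |a i j| ≤ 1) (_ : ∀ i j, |b i j| ≤ 1),
    (permE N (fun π => gammaStat N a b π ^ (2 * m + 1))) ^ 2 ≤ C * (√N) ^ (12 * m + 5) := by
  obtain ⟨C1, hC1, h1⟩ := linStat_odd m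
  obtain ⟨C2, hC2, h2⟩ := linStat_moment (2 * m)
  obtain ⟨C3, hC3, h3⟩ := quad_moment (2 * m)
  obtain ⟨C4, hC4, h4⟩ := quad_second
  set K : ℝ := (2 * m + 1) * (2 ^ (2 * m) + 1) with hK
  have hK0 : 0 ≤ K := by positivity
  refine ⟨2 * (2 ^ (2 * m + 1) * C1) ^ 2 + 2 * K ^ 2 * (C4 * (2 * (2 ^ (4 * m) * C2 + C3))),
    by positivity, ?_⟩
  intro N hN a b ha hb ha0 hb0 ba bb
  obtain ⟨α, β, p, q, hα, hβ, bα, bβ, hp, hq, bp, bq, p0, hdec⟩ :=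
    gamma_decomp hN a b ha hb ha0 hb0 ba bb
  have hN' : (1:ℝ) ≤ N := by exact_mod_cast hN
  have h1 := h1 N hN α β hα hβ bα bβ
  have h2 := h2 N hN α β hα (fun i => (bα i).trans (by norm_num))
    (fun i => (bβ i).trans (by norm_num))
  have h3 := h3 N hN p q hp hq bp bq p0
  have h4 := h4 N hN p q hp hq bp bq p0
  set s := √(N:ℝ) with hs
  have hs1 : 1 ≤ s := Real.one_le_sqrt.mpr hN'
  have hsN : (N:ℝ) = s ^ 2 := (Real.sq_sqrt (by linarith)).symm
  set x : Equiv.Perm (Fin N) → ℝ := fun π => 2 * N * linStat α β π with hx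
  set y := gammaStat N p q with hy
  have hdec' : ∀ π, gammaStat N a b π = x π + y π := hdec
  simp only [hdec']
  have ex1 : |permE N (fun π => x π ^ (2 * m + 1))| ≤ 2 ^ (2 * m + 1) * C1 * s ^ (6 * m + 2) := by
    simp only [hx, mul_pow]
    rw [permE_mul, abs_mul, abs_of_nonneg (by positivity)]
    calc _ ≤ 2 ^ (2 * m + 1) * (N:ℝ) ^ (2 * m + 1) * (C1 * N ^ m) := by gcongr
      _ = _ := by rw [hsN]; ring
  have ex2 : permE N (fun π => x π ^ (4 * m)) ≤ 2 ^ (4 * m) * C2 * s ^ (12 * m) := by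
    simp only [hx, mul_pow]
    rw [permE_mul]
    have e : 4 * m = 2 * (2 * m) := by ring
    calc _ ≤ 2 ^ (4 * m) * (N:ℝ) ^ (4 * m) * (C2 * N ^ (2 * m)) := by
          gcongr; rw [e]; exact h2
      _ = _ := by rw [hsN]; ring
  have ey2 : permE N (fun π => y π ^ (4 * m)) ≤ C3 * s ^ (12 * m) := by
    have e : 4 * m = 2 * (2 * m) := by ring
    rw [e]
    refine h3.trans (le_of_eq ?_)
    rw [hsN]; ring
  set H : Equiv.Perm (Fin N) → ℝ := fun π => x π ^ (2 * m) + y π ^ (2 * m) with hH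
  have eH : permE N (fun π => H π ^ 2) ≤ 2 * (2 ^ (4 * m) * C2 + C3) * s ^ (12 * m) := by
    have : ∀ π, H π ^ 2 ≤ 2 * (x π ^ (4 * m) + y π ^ (4 * m)) := by
      intro π
      have e1 : x π ^ (4 * m) = (x π ^ (2 * m)) ^ 2 := by rw [← pow_mul]; congr 1; ring
      have e2 : y π ^ (4 * m) = (y π ^ (2 * m)) ^ 2 := by rw [← pow_mul]; congr 1; ring
      rw [e1, e2, hH]
      nlinarith [sq_nonneg (x π ^ (2 * m) - y π ^ (2 * m))]
    refine (permE_mono N this).trans ?_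
    rw [permE_mul, permE_add]
    linarith
  have cs := permE_cs N (fun π => |y π|) H
  simp only [sq_abs] at cs
  have diff : |permE N (fun π => (x π + y π) ^ (2 * m + 1)) - permE N (fun π => x π ^ (2 * m + 1))|
      ≤ K * permE N (fun π => |y π| * H π) := by
    rw [← permE_sub, ← permE_mul]
    refine (permE_abs _ _).trans (permE_mono N fun π => pow_diff_bound m (x π) (y π))
  set P := permE N (fun π => (x π + y π) ^ (2 * m + 1))
  set X := permE N (fun π => x π ^ (2 * m + 1))
  set Z := permE N (fun π => |y π| * H π)
  have hEH0 : 0 ≤ permE N (fun π => H π ^ 2) := permE_nonneg N fun π => sq_nonneg _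
  have d2 : (P - X) ^ 2 ≤ K ^ 2 * Z ^ 2 := by
    rw [← sq_abs (P - X), ← mul_pow]
    gcongr
  have z2 : Z ^ 2 ≤ (C4 * (2 * (2 ^ (4 * m) * C2 + C3))) * s ^ (12 * m + 5) := by
    calc Z ^ 2 ≤ _ := cs
      _ ≤ (C4 * s ^ 5) * (2 * (2 ^ (4 * m) * C2 + C3) * s ^ (12 * m)) := by gcongr
      _ = _ := by ring
  have x2 : X ^ 2 ≤ (2 ^ (2 * m + 1) * C1) ^ 2 * s ^ (12 * m + 5) := by
    rw [← sq_abs]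
    calc |X| ^ 2 ≤ (2 ^ (2 * m + 1) * C1 * s ^ (6 * m + 2)) ^ 2 := by gcongr
      _ = (2 ^ (2 * m + 1) * C1) ^ 2 * s ^ (12 * m + 4) := by ring
      _ ≤ _ := by
          gcongr
          norm_num
  have : P ^ 2 ≤ 2 * X ^ 2 + 2 * (P - X) ^ 2 := by nlinarith [sq_nonneg (X - (P - X))]
  have : K ^ 2 * Z ^ 2 ≤ K ^ 2 * ((C4 * (2 * (2 ^ (4 * m) * C2 + C3))) * s ^ (12 * m + 5)) := by
    gcongr
  linarith

lemma abs_le_arrMax (N : ℕ) (a : Fin N → Fin N → ℝ) (i j : Fin N) : |a i j| ≤ arrMax N a :=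
  (le_ciSup (f := fun j => |a i j|) (Set.finite_range _).bddAbove j).trans
    (le_ciSup (f := fun i => ⨆ j, |a i j|) (Set.finite_range _).bddAbove i)

lemma tendsto_zero_sq_iff {f : ℕ → ℝ} :
    Tendsto (fun n => f n ^ 2) atTop (𝓝 0) ↔ Tendsto f atTop (𝓝 0) := by
  constructor
  · intro h
    rw [tendsto_zero_iff_abs_tendsto_zero]
    have := (Real.continuous_sqrt.tendsto 0).comp h
    simpa [Function.comp_def, Real.sqrt_sq_eq_abs] using this
  · intro h
    simpa using h.pow 2

lemma final_arith (m : ℕ) (A B σ G C c₁ c₂ s : ℝ) (hA1 : 0 < A) (hB1 : 0 < B)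
    (hc₁ : 0 < c₁) (hc₂ : 0 < c₂) (hC : 0 ≤ C) (hs0 : 0 < s)
    (hσlow : 4 * c₁ * c₂ * (A * B) ^ 2 * s ^ 6 ≤ σ ^ 2)
    (key : G ^ 2 ≤ C * s ^ (12 * m + 5)) :
    ((A * B / σ) ^ (2 * m + 1) * G) ^ 2 ≤ C / (4 * c₁ * c₂) ^ (2 * m + 1) * (1 / s) := by
  have hlow0 : 0 < 4 * c₁ * c₂ * (A * B) ^ 2 * s ^ 6 := by positivity
  calc ((A * B / σ) ^ (2 * m + 1) * G) ^ 2 = ((A * B) ^ 2 / σ ^ 2) ^ (2 * m + 1) * G ^ 2 := by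
        rw [mul_pow, ← pow_mul, mul_comm (2 * m + 1) 2, pow_mul, div_pow]
    _ ≤ ((A * B) ^ 2 / (4 * c₁ * c₂ * (A * B) ^ 2 * s ^ 6)) ^ (2 * m + 1) *
        (C * s ^ (12 * m + 5)) := by
        have hq : (A * B) ^ 2 / σ ^ 2 ≤ (A * B) ^ 2 / (4 * c₁ * c₂ * (A * B) ^ 2 * s ^ 6) :=
          div_le_div_of_nonneg_left (by positivity) hlow0 hσlow
        exact mul_le_mul (pow_le_pow_left₀ (by positivity) hq _) key (sq_nonneg _) (by positivity)
    _ = (1 / (4 * c₁ * c₂ * s ^ 6)) ^ (2 * m + 1) * (C * s ^ (12 * m + 5)) := by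
        congr 2
        field_simp
    _ = _ := by
        rw [div_pow, mul_pow, one_pow, ← pow_mul]
        have e6 : 6 * (2 * m + 1) = (12 * m + 5) + 1 := by ring
        rw [e6]
        field_simp
        ring

lemma final_bound (m N : ℕ) (hN : 0 < N) (a b : Fin N → Fin N → ℝ)
    (ha : ∀ i j, a i j = a j i) (hb : ∀ i j, b i j = b j i)
    (ha0 : ∑ i, ∑ j, a i j = 0) (hb0 : ∑ i, ∑ j, b i j = 0)
    (c₁ c₂ : ℝ) (hc₁ : 0 < c₁) (hc₂ : 0 < c₂)
    (hA : c₁ * ((N : ℝ) ^ 3 * (arrMax N a) ^ 2) ≤ ∑ i, ∑ j, ∑ k, a i j * a i k)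
    (hB : c₂ * ((N : ℝ) ^ 3 * (arrMax N b) ^ 2) ≤ ∑ i, ∑ j, ∑ k, b i j * b i k)
    (C : ℝ) (hC : 0 ≤ C)
    (h : ∀ (a b : Fin N → Fin N → ℝ)
    (_ : ∀ i j, a i j = a j i) (_ : ∀ i j, b i j = b j i)
    (_ : ∑ i, ∑ j, a i j = 0) (_ : ∑ i, ∑ j, b i j = 0)
    (_ : ∀ i j, |a i j| ≤ 1) (_ : ∀ i j, |b i j| ≤ 1),
    (permE N (fun π => gammaStat N a b π ^ (2 * m + 1))) ^ 2 ≤ C * (√N) ^ (12 * m + 5)) :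
    (permE N (fun π =>
          (gammaStat N a b π /
            (2 * Real.sqrt ((∑ i, ∑ j, ∑ k, a i j * a i k)
              * (∑ i, ∑ j, ∑ k, b i j * b i k) / (N : ℝ) ^ 3))) ^ (2 * m + 1))) ^ 2
      ≤ C / (4 * c₁ * c₂) ^ (2 * m + 1) * (1 / √(N : ℝ)) := by
  have hN' : (1:ℝ) ≤ N := by exact_mod_cast hN
  have hN0 : (0:ℝ) < N := by linarith
  set SA := ∑ i, ∑ j, ∑ k, a i j * a i k
  set SB := ∑ i, ∑ j, ∑ k, b i j * b i k
  have bA := abs_le_arrMax N a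
  have bB := abs_le_arrMax N b
  have i0 : Fin N := ⟨0, hN⟩
  set A := arrMax N a
  set B := arrMax N b
  have hA0 : 0 ≤ A := (abs_nonneg _).trans (bA i0 i0)
  have hB0 : 0 ≤ B := (abs_nonneg _).trans (bB i0 i0)
  by_cases hAB : A = 0 ∨ B = 0
  · have : ∀ π, gammaStat N a b π = 0 := by
      intro π
      unfold gammaStat
      refine Finset.sum_eq_zero fun i _ => Finset.sum_eq_zero fun j _ => ?_
      rcases hAB with h | h
      · have := bA i j
        rw [h] at this
        rw [abs_nonpos_iff.mp this, zero_mul]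
      · have := bB (π i) (π j)
        rw [h] at this
        rw [abs_nonpos_iff.mp this, mul_zero]
    simp only [this, zero_div]
    rw [zero_pow (by omega), permE_const, zero_pow two_ne_zero]
    positivity
  push Not at hAB
  have hA1 : 0 < A := lt_of_le_of_ne hA0 hAB.1.symm
  have hB1 : 0 < B := lt_of_le_of_ne hB0 hAB.2.symm
  set s := √(N:ℝ) with hs
  have hs1 : 1 ≤ s := Real.one_le_sqrt.mpr hN'
  have hsN : (N:ℝ) = s ^ 2 := (Real.sq_sqrt (by linarith)).symm
  have hs0 : 0 < s := by linarith
  have key := h (fun i j => a i j / A) (fun i j => b i j / B) (fun i j => by rw [ha i j])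
    (fun i j => by rw [hb i j]) (by simp only [← Finset.sum_div, ha0, zero_div])
    (by simp only [← Finset.sum_div, hb0, zero_div])
    (fun i j => by rw [abs_div, abs_of_pos hA1, div_le_one hA1]; exact bA i j)
    (fun i j => by rw [abs_div, abs_of_pos hB1, div_le_one hB1]; exact bB i j)
  set G := permE N (fun π => gammaStat N (fun i j => a i j / A) (fun i j => b i j / B) π ^ (2 * m + 1))
  have hg : ∀ π, gammaStat N a b π =
      A * B * gammaStat N (fun i j => a i j / A) (fun i j => b i j / B) π := by
    intro π
    unfold gammaStat
    simp only [Finset.mul_sum]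
    refine Finset.sum_congr rfl fun i _ => Finset.sum_congr rfl fun j _ => ?_
    field_simp
  set σ := 2 * √(SA * SB / (N:ℝ) ^ 3) with hσ
  have hSA : 0 < SA := lt_of_lt_of_le (by positivity) hA
  have hSB : 0 < SB := lt_of_lt_of_le (by positivity) hB
  have hσ2 : σ ^ 2 = 4 * (SA * SB / (N:ℝ) ^ 3) := by
    rw [hσ, mul_pow, Real.sq_sqrt (by positivity)]; norm_num
  have hσlow : 4 * c₁ * c₂ * (A * B) ^ 2 * s ^ 6 ≤ σ ^ 2 := by
    rw [hσ2]
    have : (c₁ * ((N : ℝ) ^ 3 * A ^ 2)) * (c₂ * ((N : ℝ) ^ 3 * B ^ 2)) ≤ SA * SB := by gcongr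
    have h2 : c₁ * c₂ * (A * B) ^ 2 * N ^ 3 ≤ SA * SB / (N:ℝ) ^ 3 := by
      rw [le_div_iff₀ (by positivity)]
      refine le_trans (le_of_eq ?_) this
      ring
    have e : s ^ 6 = (N:ℝ) ^ 3 := by rw [hsN]; ring
    rw [e]
    linarith
  have e1 : permE N (fun π => (gammaStat N a b π / σ) ^ (2 * m + 1)) =
      (A * B / σ) ^ (2 * m + 1) * G := by
    rw [← permE_mul]
    congr 1; ext π
    rw [hg π]; ring
  rw [e1]
  exact final_arith m A B σ G C c₁ c₂ s hA1 hB1 hc₁ hc₂ hC hs0 hσlow key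

/-- **Vanishing of odd scaled moments.** -/
theorem odd_scaled_moments_tendsto_zero
    (a b : (N : ℕ) → Fin N → Fin N → ℝ)
    (ha_symm : ∀ N, ∀ i j : Fin N, a N i j = a N j i)
    (hb_symm : ∀ N, ∀ i j : Fin N, b N i j = b N j i)
    (ha_sum : ∀ N, ∑ i, ∑ j, a N i j = 0)
    (hb_sum : ∀ N, ∑ i, ∑ j, b N i j = 0)
    (hA : AsympEquiv (fun N => ∑ i, ∑ j, ∑ k, a N i j * a N i k)
      (fun N => (N : ℝ) ^ 3 * (arrMax N (a N)) ^ 2))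
    (hB : AsympEquiv (fun N => ∑ i, ∑ j, ∑ k, b N i j * b N i k)
      (fun N => (N : ℝ) ^ 3 * (arrMax N (b N)) ^ 2))
    :
    ∀ m : ℕ,
      Tendsto (fun N : ℕ => permE N (fun π =>
          (gammaStat N (a N) (b N) π /
            (2 * Real.sqrt ((∑ i, ∑ j, ∑ k, a N i j * a N i k)
              * (∑ i, ∑ j, ∑ k, b N i j * b N i k) / (N : ℝ) ^ 3))) ^ (2 * m + 1)))
        atTop (𝓝 0) := by
  intro m
  obtain ⟨c₁, _, hc₁, _, hA⟩ := hA
  obtain ⟨c₂, _, hc₂, _, hB⟩ := hB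
  obtain ⟨C, hC, hmain⟩ := bounded_main m
  have hlim : Tendsto (fun N : ℕ => C / (4 * c₁ * c₂) ^ (2 * m + 1) * (1 / √(N : ℝ)))
      atTop (𝓝 0) := by
    have h1 : Tendsto (fun N : ℕ => √(N : ℝ)) atTop atTop :=
      Real.tendsto_sqrt_atTop.comp tendsto_natCast_atTop_atTop
    have h2 := (tendsto_const_nhds (x := (1:ℝ))).div_atTop h1
    simpa using h2.const_mul (C / (4 * c₁ * c₂) ^ (2 * m + 1))
  rw [← tendsto_zero_sq_iff]
  refine squeeze_zero' (Eventually.of_forall fun N => sq_nonneg _) ?_ hlim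
  filter_upwards [hA, hB, eventually_gt_atTop 0] with N hA hB hN
  exact final_bound m N hN (a N) (b N) (ha_symm N) (hb_symm N) (ha_sum N) (hb_sum N) c₁ c₂ hc₁ hc₂
    hA.1 hB.1 C hC (hmain N hN)
end
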